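/- Let σ : Σ → Σ be a one-sided countable state Markov shift, G a countable group, ψ : Σ → G depending only on the first coordinate with T_ψ topologically transitive, φ : Σ → ℝ locally Hölder continuous, ρ = e^{P_G(φ,T_ψ)} < ∞. Fix a state a and a point o ∈ [a], and let Z = ∪_{n≥0} {z ∈ Σ : σ^n z = o}. Let (c_n) be positive reals with lim_{n→∞} c_n/c_{n+k} = 1 for every fixed k ≥ 1, and set ζ_{z,g}(t) = Σ_{n≥1} t^{−n} c_n^{−1} (𝓛_φ^n 1_{[a]×{e}})(z,g), assumed finite for all t > ρ, all z ∈ Z and all g ∈ G. Then there exists a sequence t_n ↓ ρ such that for every (z,g) ∈ Z × G the limit Φ(z,g) := lim_{n→∞} ζ_{z,g}(t_n)/ζ_{z,e}(t_n) exists and lies in (0,∞), and moreover for every state a' and every g ∈ G: 0 < inf_{z ∈ Z ∩ [a']} Φ(z,g) ≤ sup_{z ∈ Z ∩ [a']} Φ(z,g) < ∞. -/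

import Mathlib

/-!
Prepending a fixed word `u` with `ψ(u) = g` that leads from the state `a` back to `a` maps the
points `y ∈ [a]` with `σ^n y = z`, `ψ_n(y) = h` injectively to points `y' ∈ [a]` with
`σ^{k+n} y' = z`, `ψ_{k+n}(y') = gh`, where `k = |u|`. Since `φ` has bounded variation on
1-cylinders, this changes `e^{φ^n}` at most by a constant factor that depends on `u` alone.
Because `c_n / c_{n+k}` is bounded below, summing over `n` gives `ζ_{z,h}(t) ≤ K ζ_{z,gh}(t)` with
`K` depending on `g` only: it is uniform in `z` and in `t ∈ (ρ, ρ + 1]`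
(`zeta_le_const_mul`). With `g` and with `g⁻¹` this bounds `ζ_{z,g}/ζ_{z,e}` between two positive
constants that do not depend on `z`. As `Z` and `G` are countable, sequential compactness of
`[0,∞]^(Z × G)` provides a sequence `t_n ↓ ρ` along which all ratios converge, and the limits
inherit the bounds.

The loops `u` exist because the skew product is irreducible. A dense orbit alone does not give
this, but a pressure above `-∞` at every state puts every state on a periodic orbit; the
dense orbit follows that periodic orbit for arbitrarily long times and hence visits
every state infinitely often (`visits_infinitely_often`).
-/

open scoped ENNReal NNReal BigOperators
open Filter

namespace Gurevic

/-! ## Countable state Markov shifts -/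

/-- The space of a one-sided countable state Markov shift with state set `S`
and transition matrix `A`. -/
def Space {S : Type*} (A : S → S → Prop) : Type _ :=
  {x : ℕ → S // ∀ n : ℕ, A (x n) (x (n + 1))}

/-- The shift map of a countable state Markov shift. -/
def shift {S : Type*} (A : S → S → Prop) : Space A → Space A :=
  fun x => ⟨fun n => x.1 (n + 1), fun n => x.2 (n + 1)⟩

/-- The cylinder set determined by a word `w`. -/
def Cyl {S : Type*} (A : S → S → Prop) (w : List S) : Set (Space A) :=
  {x | ∀ (i : ℕ) (h : i < w.length), x.1 i = w[i]}

/-- The cylinder set determined by a single state `a`. -/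
def CylS {S : Type*} (A : S → S → Prop) (a : S) : Set (Space A) :=
  {x | x.1 0 = a}

/-- A word is allowed if all its transitions are allowed. -/
def Allowed {S : Type*} (A : S → S → Prop) (w : List S) : Prop :=
  List.Chain' A w

/-- Topological transitivity: some orbit is dense (it visits every nonempty
cylinder; cylinders form a basis for the topology). -/
def TopTransitive {S : Type*} (A : S → S → Prop) : Prop :=
  ∃ x : Space A, ∀ w : List S, (Cyl A w).Nonempty → ∃ n : ℕ, (shift A)^[n] x ∈ Cyl A w

/-- Topological mixing: for all states `a, b` there is `N` such that for every
`n ≥ N` there is a word `w` of length `n` with `awb` allowed. -/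
def TopMixing {S : Type*} (A : S → S → Prop) : Prop :=
  ∀ a b : S, ∃ N : ℕ, ∀ n : ℕ, N ≤ n →
    ∃ w : List S, w.length = n ∧ List.Chain' A (a :: (w ++ [b]))

/-- The big images and preimages (BIP) property. -/
def BIP {S : Type*} (A : S → S → Prop) : Prop :=
  ∃ B : Finset S, ∀ a : S, (∃ b ∈ B, A b a) ∧ (∃ b ∈ B, A a b)

/-- Birkhoff sum `φ^n = φ + φ∘σ + ⋯ + φ∘σ^{n-1}`. -/
def birk {S : Type*} (A : S → S → Prop) (φ : Space A → ℝ) (n : ℕ) (x : Space A) : ℝ :=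
  ∑ j ∈ Finset.range n, φ ((shift A)^[j] x)

/-- Local Hölder continuity of a potential. -/
def LocHolder {S : Type*} (A : S → S → Prop) (φ : Space A → ℝ) : Prop :=
  ∃ C : ℝ, 0 < C ∧ ∃ θ : ℝ, 0 < θ ∧ θ < 1 ∧
    ∀ n : ℕ, 1 ≤ n → ∀ w : List S, w.length = n → Allowed A w →
      ∀ x ∈ Cyl A w, ∀ y ∈ Cyl A w, |φ x - φ y| ≤ C * θ ^ n

/-- The sum over periodic points of period `n` starting at state `a`,
weighted by `e^{φ^n}`. -/
noncomputable def Zper {S : Type*} (A : S → S → Prop) (φ : Space A → ℝ) (a : S) (n : ℕ) :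
    ℝ≥0∞ :=
  ∑' x : {x : Space A // (shift A)^[n] x = x ∧ x.1 0 = a},
    ENNReal.ofReal (Real.exp (birk A φ n x.1))

/-- The Gurevič pressure of `φ` (with base state `a`):
`limsup (1/n) log Σ_{σ^n x = x, x ∈ [a]} e^{φ^n(x)}`. -/
noncomputable def gurevic {S : Type*} (A : S → S → Prop) (φ : Space A → ℝ) (a : S) : EReal :=
  Filter.atTop.limsup fun n : ℕ =>
    (((n : ℝ)⁻¹ : ℝ) : EReal) * ENNReal.log (Zper A φ a n)

/-- Summability of a potential: `sup_x Σ_{σy = x} e^{φ(y)} < ∞`. -/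
def SummablePot {S : Type*} (A : S → S → Prop) (φ : Space A → ℝ) : Prop :=
  ∃ C : ℝ, ∀ x : Space A,
    (∑' y : {y : Space A // shift A y = x}, ENNReal.ofReal (Real.exp (φ y.1))) ≤
      ENNReal.ofReal C

/-! ## Skew product extensions -/

/-- The transition matrix of the skew product extension `T_ψ` on states `S × G`. -/
def skewA {S G : Type*} [Mul G] (A : S → S → Prop) (ψ : S → G) :
    (S × G) → (S × G) → Prop :=
  fun p q => A p.1 q.1 ∧ q.2 = p.2 * ψ p.1

/-- Projection from the skew product shift space to the base shift space. -/
def skewProj {S G : Type*} [Mul G] (A : S → S → Prop) (ψ : S → G) :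
    Space (skewA A ψ) → Space A :=
  fun x => ⟨fun n => (x.1 n).1, fun n => (x.2 n).1⟩

/-- The cocycle `ψ_n(x) = ψ(x) ψ(σx) ⋯ ψ(σ^{n-1}x)` (recall `ψ(x)` depends only on `x_0`). -/
def psiN {S G : Type*} [Monoid G] {A : S → S → Prop} (ψ : S → G) (n : ℕ) (x : Space A) : G :=
  ((List.range n).map fun j => ψ (x.1 j)).prod

/-- The Gurevič pressure of the skew product `T_ψ` with potential `(x,g) ↦ φ(x)`,
with base state `(a, g)`. -/
noncomputable def gurevicSkew {S G : Type*} [Mul G] (A : S → S → Prop) (ψ : S → G)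
    (φ : Space A → ℝ) (a : S) (g : G) : EReal :=
  gurevic (skewA A ψ) (fun x => φ (skewProj A ψ x)) (a, g)

/-! ## Abelianization -/

/-- `π : G →* ℤ^d` realizes `ℤ^d` as the torsion-free part of the abelianization of `G`:
it is surjective and its kernel consists of the elements `g` such that some positive
power of `g` lies in the commutator subgroup. -/
def IsTorsionFreeAbelianization {G : Type*} [Group G] (d : ℕ)
    (π : G →* Multiplicative (Fin d → ℤ)) : Prop :=
  Function.Surjective π ∧
    ∀ g : G, π g = 1 ↔ ∃ n : ℕ, 0 < n ∧ g ^ n ∈ commutator G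

/-- `ψ̄ = π ∘ ψ`, viewed additively as a function to `ℤ^d`. -/
def psibar {S G : Type*} [Group G] {d : ℕ} (π : G →* Multiplicative (Fin d → ℤ))
    (ψ : S → G) : S → (Fin d → ℤ) :=
  fun s => Multiplicative.toAdd (π (ψ s))

/-- Standard inner product `⟨w, v⟩` of `w ∈ ℝ^d` with an integer vector `v ∈ ℤ^d`. -/
def dotZ {d : ℕ} (w : Fin d → ℝ) (v : Fin d → ℤ) : ℝ :=
  ∑ i, w i * (v i : ℝ)

/-- Euclidean norm of an integer vector. -/
noncomputable def normZ {d : ℕ} (v : Fin d → ℤ) : ℝ :=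
  Real.sqrt (∑ i, ((v i : ℝ)) ^ 2)

/-- Euclidean norm on `ℝ^d`. -/
noncomputable def normR {d : ℕ} (w : Fin d → ℝ) : ℝ :=
  Real.sqrt (∑ i, (w i) ^ 2)

/-- `δ(φ, f) = sup { r ≥ 0 : φ + r|f| is summable }`, valued in `[0,∞]`. -/
noncomputable def deltaExp {S : Type*} (A : S → S → Prop) (φ : Space A → ℝ) {d : ℕ}
    (f : S → (Fin d → ℤ)) : ℝ≥0∞ :=
  ⨆ (r : ℝ≥0) (_ : SummablePot A fun x => φ x + (r : ℝ) * normZ (f (x.1 0))), (r : ℝ≥0∞)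

/-! ## Amenability -/

/-- A bounded real-valued function. -/
def IsBddFn {G : Type*} (f : G → ℝ) : Prop := ∃ C : ℝ, ∀ g : G, |f g| ≤ C

/-- A right-invariant mean on `ℓ^∞(G)`: a positive normalized linear functional on the
bounded real-valued functions on `G` which is invariant under right translation. -/
structure RightInvariantMean (G : Type*) [Group G] where
  M : (G → ℝ) → ℝ
  map_add : ∀ f₁ f₂ : G → ℝ, IsBddFn f₁ → IsBddFn f₂ → M (f₁ + f₂) = M f₁ + M f₂
  map_smul : ∀ (c : ℝ) (f : G → ℝ), IsBddFn f → M (c • f) = c * M f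
  map_one : M (fun _ => (1 : ℝ)) = 1
  nonneg : ∀ f : G → ℝ, IsBddFn f → (∀ g : G, 0 ≤ f g) → 0 ≤ M f
  right_invariant : ∀ f : G → ℝ, IsBddFn f → ∀ γ : G, M (fun g => f (g * γ)) = M f

/-- A group is amenable if it admits a right-invariant mean on `ℓ^∞(G)`. -/
def Amenable (G : Type*) [Group G] : Prop := Nonempty (RightInvariantMean G)

/-! ## Transfer operators for skew products -/

/-- `(𝓛_φ^n 1_{[a]×{e}})(o, g) = Σ { e^{φ^n(y)} : σ^n y = o, y ∈ [a], ψ_n(y) = g }`. -/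
noncomputable def transferInd {S G : Type*} [Monoid G] (A : S → S → Prop)
    (φ : Space A → ℝ) (ψ : S → G) (a : S) (n : ℕ) (o : Space A) (g : G) : ℝ≥0∞ :=
  ∑' y : {y : Space A // (shift A)^[n] y = o ∧ y.1 0 = a ∧ psiN ψ n y = g},
    ENNReal.ofReal (Real.exp (birk A φ n y.1))

/-- `(𝓛_φ^n v)(z, g) = Σ_{σ^n y = z} e^{φ^n(y)} v(y, g ψ_n(y)⁻¹)`. -/
noncomputable def transferOp {S G : Type*} [Group G] (A : S → S → Prop)
    (φ : Space A → ℝ) (ψ : S → G) (n : ℕ) (v : Space A → G → ℝ≥0∞)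
    (z : Space A) (g : G) : ℝ≥0∞ :=
  ∑' y : {y : Space A // (shift A)^[n] y = z},
    ENNReal.ofReal (Real.exp (birk A φ n y.1)) * v y.1 (g * (psiN ψ n y.1)⁻¹)

/-- The series `ζ_{o,g}(t) = Σ_{n ≥ 1} t^{-n} c_n^{-1} (𝓛_φ^n 1_{[a]×{e}})(o, g)`. -/
noncomputable def zeta {S G : Type*} [Monoid G] (A : S → S → Prop) (φ : Space A → ℝ)
    (ψ : S → G) (a : S) (c : ℕ → ℝ) (t : ℝ) (o : Space A) (g : G) : ℝ≥0∞ :=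
  ∑' n : ℕ, ENNReal.ofReal ((t ^ (n + 1))⁻¹ * (c (n + 1))⁻¹) *
    transferInd A φ ψ a (n + 1) o g

/-- The set `Z` of all preimages of a point `o`. -/
def preOrbit {S : Type*} (A : S → S → Prop) (o : Space A) : Set (Space A) :=
  {z | ∃ n : ℕ, (shift A)^[n] z = o}

/-! ## Topology, measures, Gibbs measures -/

instance instTopSpace {S : Type*} (A : S → S → Prop) : TopologicalSpace (Space A) :=
  TopologicalSpace.induced (fun x => x.1)
    (@Pi.topologicalSpace ℕ (fun _ => S) (fun _ => ⊥))

instance instMeasSpace {S : Type*} (A : S → S → Prop) : MeasurableSpace (Space A) :=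
  borel (Space A)

/-- A Gibbs measure for the potential `Φ`: a shift-invariant Borel probability measure
with the Gibbs property. -/
def IsGibbs {S : Type*} (A : S → S → Prop) (Φ : Space A → ℝ)
    (μ : MeasureTheory.Measure (Space A)) : Prop :=
  MeasureTheory.IsProbabilityMeasure μ ∧
  (∀ s : Set (Space A), MeasurableSet s → μ (shift A ⁻¹' s) = μ s) ∧
  ∃ A' B' : ℝ, 0 < A' ∧ 0 < B' ∧ ∃ P : ℝ,
    ∀ n : ℕ, 1 ≤ n → ∀ w : List S, w.length = n → Allowed A w →
      ∀ x ∈ Cyl A w,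
        ENNReal.ofReal (A' * Real.exp (birk A Φ n x - n * P)) ≤ μ (Cyl A w) ∧
        μ (Cyl A w) ≤ ENNReal.ofReal (B' * Real.exp (birk A Φ n x - n * P))

/-! ## Periodic orbit sums for the equidistribution results -/

/-- `Λ^ψ(n) = {x : σ^n x = x, ψ_n(x) = e}`. -/
def LambdaPer {S G : Type*} [Monoid G] (A : S → S → Prop) (ψ : S → G) (n : ℕ) :
    Set (Space A) :=
  {x | (shift A)^[n] x = x ∧ psiN ψ n x = 1}

/-- `Λ^ψ(n, o) = {x : σ^n x = o, ψ_n(x) = e}`. -/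
def LambdaPre {S G : Type*} [Monoid G] (A : S → S → Prop) (ψ : S → G) (n : ℕ)
    (o : Space A) : Set (Space A) :=
  {x | (shift A)^[n] x = o ∧ psiN ψ n x = 1}

/-- `Π_φ(Λ) = Σ_{x ∈ Λ} e^{φ^n(x)}`, valued in `[0,∞]`. -/
noncomputable def PiSum {S : Type*} (A : S → S → Prop) (φ : Space A → ℝ) (n : ℕ)
    (Λ : Set (Space A)) : ℝ≥0∞ :=
  ∑' x : Λ, ENNReal.ofReal (Real.exp (birk A φ n x.1))

/-- `∫ g d𝔐_φ(Λ_n)` where `𝔐_φ(Λ_n) = Π_φ(Λ_n)⁻¹ Σ_{x ∈ Λ_n} e^{φ^n(x)} τ_{x,n}`,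
using `∫ g dτ_{x,n} = (1/n) g^n(x)`. -/
noncomputable def MVal {S : Type*} (A : S → S → Prop) (φ : Space A → ℝ) (n : ℕ)
    (Λ : Set (Space A)) (g : Space A → ℝ) : ℝ :=
  (∑' x : Λ, Real.exp (birk A φ n x.1) * (birk A g n x.1 / n)) /
    (∑' x : Λ, Real.exp (birk A φ n x.1))

/-- The sum over all periodic points `x` of period `n` with `ψ_n(x) = e`,
weighted by `e^{φ^n}`. -/
noncomputable def ZperAll {S G : Type*} [Monoid G] (A : S → S → Prop) (φ : Space A → ℝ)
    (ψ : S → G) (n : ℕ) : ℝ≥0∞ :=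
  ∑' x : {x : Space A // (shift A)^[n] x = x ∧ psiN ψ n x = 1},
    ENNReal.ofReal (Real.exp (birk A φ n x.1))


/-! ### Irreducibility of the skew product -/

lemma shift_iterate_apply {S : Type*} {A : S → S → Prop} (n : ℕ) (x : Space A) (i : ℕ) :
    ((shift A)^[n] x).1 i = x.1 (i + n) := by
  induction n generalizing x with
  | zero => rfl
  | succ n ih =>
    rw [Function.iterate_succ_apply, ih]
    change x.1 (i + n + 1) = _
    rw [add_assoc]

/-- If the Gurevič pressure at `q` is not `-∞`, then some periodic orbit passes through `q`. -/
lemma exists_periodic {S : Type*} {A : S → S → Prop} {φ : Space A → ℝ} {q : S} {P : ℝ}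
    (h : gurevic A φ q = (P : EReal)) :
    ∃ n : ℕ, 1 ≤ n ∧ ∃ y : Space A, (shift A)^[n] y = y ∧ y.1 0 = q := by
  by_contra! hcon
  have hbot : gurevic A φ q = ⊥ := by
    unfold gurevic
    have hev : (fun n : ℕ => (((n : ℝ)⁻¹ : ℝ) : EReal) * ENNReal.log (Zper A φ q n))
        =ᶠ[atTop] fun _ => (⊥ : EReal) := by
      filter_upwards [eventually_ge_atTop 1] with n hn
      have hZ : Zper A φ q n = 0 := by
        unfold Zper
        rw [ENNReal.tsum_eq_zero]
        rintro ⟨x, hx1, hx2⟩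
        exact absurd hx2 (hcon n hn x hx1)
      rw [hZ, ENNReal.log_zero, EReal.coe_mul_bot_of_pos]
      have : (0 : ℝ) < n := by exact_mod_cast hn
      positivity
    rw [limsup_congr hev, limsup_const]
  rw [hbot] at h
  exact EReal.coe_ne_bot P h.symm

/-- A dense orbit visits every state lying on a periodic orbit infinitely often: it must follow
the periodic word repeated `N` times, for every `N`. -/
lemma visits_infinitely_often {S : Type*} {A : S → S → Prop} {x : Space A}
    (hx : ∀ w : List S, (Cyl A w).Nonempty → ∃ n : ℕ, (shift A)^[n] x ∈ Cyl A w)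
    {q : S} {n : ℕ} (hn : 1 ≤ n) {y : Space A} (hy : (shift A)^[n] y = y) (hq : y.1 0 = q)
    (N : ℕ) : ∃ m, N ≤ m ∧ x.1 m = q := by
  have hper : ∀ j, y.1 (j * n) = q := by
    intro j
    induction j with
    | zero => simpa using hq
    | succ j ih =>
      rw [← ih]
      conv_rhs => rw [← hy]
      rw [shift_iterate_apply, add_one_mul]
  obtain ⟨m, hm⟩ := hx (List.ofFn fun i : Fin (N * n + 1) => y.1 i)
    ⟨y, fun i hi => by simp [-List.ofFn_succ]⟩
  have h := hm (N * n) (by simp)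
  rw [shift_iterate_apply] at h
  refine ⟨N * n + m, by nlinarith, ?_⟩
  rw [h, List.getElem_ofFn]
  exact hper N

lemma skew_prod {S G : Type*} [Group G] {A : S → S → Prop} {ψ : S → G}
    (x : Space (skewA A ψ)) (k : ℕ) :
    (x.1 k).2 = (x.1 0).2 * psiN ψ k (skewProj A ψ x) := by
  induction k with
  | zero => simp [psiN]
  | succ k ih =>
    rw [(x.2 k).2, ih]
    simp [psiN, List.range_succ, skewProj, mul_assoc]

/-- Any two states `a, b` are joined by a word with prescribed `ψ`-value `g`; the
word is encoded as the first `k` letters of a point `u`. -/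
lemma exists_connecting {S G : Type*} [Group G] {A : S → S → Prop} {φ : Space A → ℝ} {ψ : S → G}
    (hT : TopTransitive (skewA A ψ)) {P : ℝ}
    (hP : ∀ (b : S) (h : G), gurevicSkew A ψ φ b h = (P : EReal)) (a b : S) (g : G) :
    ∃ (k : ℕ) (u : Space A), 1 ≤ k ∧ u.1 0 = a ∧ u.1 k = b ∧ psiN ψ k u = g := by
  obtain ⟨x, hx⟩ := hT
  obtain ⟨n, hn, y, hy, hya⟩ := exists_periodic (hP a 1)
  obtain ⟨m, -, hm⟩ := visits_infinitely_often hx hn hy hya 0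
  obtain ⟨n', hn', y', hy', hyb⟩ := exists_periodic (hP b g)
  obtain ⟨m', hm1, hm'⟩ := visits_infinitely_often hx hn' hy' hyb (m + 1)
  set v := (shift (skewA A ψ))^[m] x
  have hv0 : v.1 0 = (a, 1) := by rw [shift_iterate_apply, zero_add, hm]
  have hvk : v.1 (m' - m) = (b, g) := by
    rw [shift_iterate_apply, Nat.sub_add_cancel (by omega), hm']
  refine ⟨m' - m, skewProj A ψ v, by omega, ?_, ?_, ?_⟩
  · change (v.1 0).1 = a
    rw [hv0]
  · change (v.1 (m' - m)).1 = b
    rw [hvk]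
  · have h := skew_prod v (m' - m)
    rw [hv0, hvk, one_mul] at h
    exact h.symm

/-! ### Prepending words -/

/-- The point obtained by prepending the first `k` letters of `u` to `y`, when `u_k = y_0`. -/
def glue {S : Type*} {A : S → S → Prop} (u : Space A) (k : ℕ) (y : Space A)
    (h : u.1 k = y.1 0) : Space A :=
  ⟨fun i => if i < k then u.1 i else y.1 (i - k), fun i => by
    change A (if i < k then u.1 i else y.1 (i - k))
      (if i + 1 < k then u.1 (i + 1) else y.1 (i + 1 - k))
    rcases lt_trichotomy (i + 1) k with h1 | h1 | h1
    · rw [if_pos (by omega), if_pos h1]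
      exact u.2 i
    · rw [if_pos (by omega), if_neg (by omega), h1, Nat.sub_self, ← h, ← h1]
      exact u.2 i
    · rw [if_neg (by omega), if_neg (by omega), show i + 1 - k = i - k + 1 by omega]
      exact y.2 (i - k)⟩

lemma glue_apply_lt {S : Type*} {A : S → S → Prop} (u : Space A) (k : ℕ) (y : Space A)
    (h : u.1 k = y.1 0) {i : ℕ} (hi : i < k) : (glue u k y h).1 i = u.1 i :=
  if_pos hi

lemma shift_glue {S : Type*} {A : S → S → Prop} (u : Space A) (k : ℕ) (y : Space A)
    (h : u.1 k = y.1 0) : (shift A)^[k] (glue u k y h) = y := by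
  apply Subtype.ext
  funext i
  rw [shift_iterate_apply]
  change (if i + k < k then u.1 (i + k) else y.1 (i + k - k)) = _
  rw [if_neg (by omega), Nat.add_sub_cancel]

lemma psiN_glue {S G : Type*} [Monoid G] {A : S → S → Prop} (ψ : S → G) (u : Space A) (k : ℕ)
    (y : Space A) (h : u.1 k = y.1 0) : psiN ψ k (glue u k y h) = psiN ψ k u := by
  unfold psiN
  congr 1
  refine List.map_congr_left fun i hi => ?_
  rw [glue_apply_lt _ _ _ _ (List.mem_range.1 hi)]

lemma psiN_add {S G : Type*} [Monoid G] {A : S → S → Prop} (ψ : S → G) (k n : ℕ) (x : Space A) :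
    psiN ψ (k + n) x = psiN ψ k x * psiN ψ n ((shift A)^[k] x) := by
  unfold psiN
  rw [List.range_add, List.map_append, List.prod_append, List.map_map]
  congr 2
  refine List.map_congr_left fun i _ => ?_
  rw [shift_iterate_apply, Function.comp_apply, add_comm]

lemma birk_add {S : Type*} {A : S → S → Prop} (φ : Space A → ℝ) (k n : ℕ) (x : Space A) :
    birk A φ (k + n) x = birk A φ k x + birk A φ n ((shift A)^[k] x) := by
  unfold birk
  rw [Finset.sum_range_add]
  congr 1
  refine Finset.sum_congr rfl fun i _ => ?_
  rw [← Function.iterate_add_apply, add_comm]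

/-- Prepending a fixed word changes the Birkhoff sum by an amount bounded below uniformly in
the point to which the word is prepended. -/
lemma exists_birk_glue_bound {S : Type*} {A : S → S → Prop} {φ : Space A → ℝ}
    (hφ : LocHolder A φ) (u : Space A) (k : ℕ) :
    ∃ D : ℝ, ∀ (y : Space A) (h : u.1 k = y.1 0), D ≤ birk A φ k (glue u k y h) := by
  obtain ⟨C, -, θ, -, -, hC⟩ := hφ
  have hvar : ∀ x y : Space A, x.1 0 = y.1 0 → |φ x - φ y| ≤ C * θ := by
    intro x y hxy
    have := hC 1 le_rfl [y.1 0] rfl (List.isChain_singleton _) x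
      (by
        intro i hi
        obtain rfl : i = 0 := by simpa using hi
        simpa using hxy) y
      (by
        intro i hi
        obtain rfl : i = 0 := by simpa using hi
        simp)
    simpa using this
  refine ⟨∑ j ∈ Finset.range k, (φ ((shift A)^[j] u) - C * θ), fun y h => ?_⟩
  refine Finset.sum_le_sum fun j hj => ?_
  have := hvar ((shift A)^[j] u) ((shift A)^[j] (glue u k y h)) (by
    rw [shift_iterate_apply, shift_iterate_apply, zero_add,
      glue_apply_lt _ _ _ _ (Finset.mem_range.1 hj)])
  linarith [(abs_le.1 this).2]

lemma transferInd_glue_le {S G : Type*} [Group G] {A : S → S → Prop} {φ : Space A → ℝ}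
    {ψ : S → G} {a : S} {u : Space A} {k : ℕ} (hu0 : u.1 0 = a) (hk : 1 ≤ k) (huk : u.1 k = a)
    {D : ℝ} (hD : ∀ (y : Space A) (h : u.1 k = y.1 0), D ≤ birk A φ k (glue u k y h))
    (n : ℕ) (z : Space A) (h : G) :
    ENNReal.ofReal (Real.exp D) * transferInd A φ ψ a n z h ≤
      transferInd A φ ψ a (n + k) z (psiN ψ k u * h) := by
  unfold transferInd
  rw [← ENNReal.tsum_mul_left]
  let f : {y : Space A // (shift A)^[n] y = z ∧ y.1 0 = a ∧ psiN ψ n y = h} →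
      {y : Space A // (shift A)^[n + k] y = z ∧ y.1 0 = a ∧
        psiN ψ (n + k) y = psiN ψ k u * h} := fun y =>
    ⟨glue u k y.1 (huk.trans y.2.2.1.symm), by
      rw [Function.iterate_add_apply, shift_glue, y.2.1], by
      rw [glue_apply_lt _ _ _ _ (by omega), hu0], by
      rw [add_comm, psiN_add, psiN_glue, shift_glue, y.2.2.2]⟩
  have hf : Function.Injective f := by
    intro y y' hyy
    have h1 : (shift A)^[k] (f y).1 = (shift A)^[k] (f y').1 := by rw [hyy]
    simp only [f, shift_glue] at h1
    exact Subtype.ext h1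
  refine le_trans (ENNReal.tsum_le_tsum fun y => ?_)
    (ENNReal.tsum_comp_le_tsum_of_injective hf fun y =>
      ENNReal.ofReal (Real.exp (birk A φ (n + k) y.1)))
  rw [← ENNReal.ofReal_mul (Real.exp_pos _).le, ← Real.exp_add]
  refine ENNReal.ofReal_le_ofReal (Real.exp_le_exp.2 ?_)
  simp only [f]
  rw [add_comm n k, birk_add, shift_glue]
  linarith [hD y.1 (huk.trans y.2.2.1.symm)]

/-! ### Comparison of the series `ζ` -/

/-- `c_n / c_{n+k}` is bounded below by a positive constant. -/
lemma exists_ratio_bound {c : ℕ → ℝ} (hc : ∀ n : ℕ, 0 < c n) {k : ℕ}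
    (hcr : Tendsto (fun n : ℕ => c n / c (n + k)) atTop (nhds 1)) :
    ∃ m : ℝ, 0 < m ∧ ∀ n, m * (c n)⁻¹ ≤ (c (n + k))⁻¹ := by
  have hlim : Tendsto (fun n : ℕ => (c n / c (n + k))⁻¹) atTop (nhds 1) := by
    simpa using hcr.inv₀ one_ne_zero
  obtain ⟨M, hM⟩ := hlim.bddAbove_range
  have hM' : ∀ n, (c n / c (n + k))⁻¹ ≤ M := fun n => hM ⟨n, rfl⟩
  have hpos : ∀ n, 0 < c n / c (n + k) := fun n => div_pos (hc _) (hc _)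
  have hM0 : 0 < M := lt_of_lt_of_le (inv_pos.2 (hpos 0)) (hM' 0)
  refine ⟨M⁻¹, inv_pos.2 hM0, fun n => ?_⟩
  have h1 : M⁻¹ ≤ c n / c (n + k) := inv_le_of_inv_le₀ (hpos n) (hM' n)
  have h2 := mul_le_mul_of_nonneg_right h1 (inv_pos.2 (hc n)).le
  have h3 : c n / c (n + k) * (c n)⁻¹ = (c (n + k))⁻¹ := by
    have := (hc n).ne'
    field_simp
  rwa [h3] at h2

/-- The comparison `K ζ_{z,h}(t) ≤ ζ_{z,gh}(t)`, with `K > 0` independent of `z`, `h` and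
`t ∈ (0, R]`. -/
lemma zeta_le_const_mul {S G : Type*} [Group G] {A : S → S → Prop} {φ : Space A → ℝ} {ψ : S → G}
    (hT : TopTransitive (skewA A ψ)) (hφ : LocHolder A φ) {P : ℝ}
    (hP : ∀ (b : S) (h : G), gurevicSkew A ψ φ b h = (P : EReal)) (a : S)
    {c : ℕ → ℝ} (hc : ∀ n : ℕ, 0 < c n)
    (hcr : ∀ k : ℕ, 1 ≤ k → Tendsto (fun n : ℕ => c n / c (n + k)) atTop (nhds 1))
    {R : ℝ} (hR : 0 < R) (g : G) :
    ∃ K : ℝ, 0 < K ∧ ∀ (t : ℝ), 0 < t → t ≤ R → ∀ (z : Space A) (h : G),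
      ENNReal.ofReal K * zeta A φ ψ a c t z h ≤ zeta A φ ψ a c t z (g * h) := by
  obtain ⟨k, u, hk, hu0, huk, rfl⟩ := exists_connecting hT hP a a g
  obtain ⟨D, hD⟩ := exists_birk_glue_bound hφ u k
  obtain ⟨m, hm0, hm⟩ := exists_ratio_bound hc (hcr k hk)
  refine ⟨(R ^ k)⁻¹ * m * Real.exp D, by positivity, fun t ht0 htR z h => ?_⟩
  unfold zeta
  rw [← ENNReal.tsum_mul_left]
  refine le_trans (ENNReal.tsum_le_tsum fun n => ?_)
    (ENNReal.tsum_comp_le_tsum_of_injective (add_left_injective k) fun n =>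
      ENNReal.ofReal ((t ^ (n + 1))⁻¹ * (c (n + 1))⁻¹) *
        transferInd A φ ψ a (n + 1) z (psiN ψ k u * h))
  have hT1 := transferInd_glue_le (ψ := ψ) hu0 hk huk hD (n + 1) z h
  rw [show n + k + 1 = n + 1 + k by ring]
  refine le_trans ?_ (mul_le_mul_right hT1 _)
  rw [← mul_assoc, ← mul_assoc, ← ENNReal.ofReal_mul (by positivity),
    ← ENNReal.ofReal_mul (mul_nonneg (by positivity) (inv_pos.2 (hc _)).le)]
  refine mul_le_mul_left (ENNReal.ofReal_le_ofReal ?_) _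
  have h1 : (R ^ k)⁻¹ ≤ (t ^ k)⁻¹ := by gcongr
  have h2 : m * (c (n + 1))⁻¹ ≤ (c (n + 1 + k))⁻¹ := hm (n + 1)
  have h3 : 0 < (c (n + 1))⁻¹ := inv_pos.2 (hc _)
  calc (R ^ k)⁻¹ * m * Real.exp D * ((t ^ (n + 1))⁻¹ * (c (n + 1))⁻¹)
      = (t ^ (n + 1))⁻¹ * Real.exp D * ((R ^ k)⁻¹ * (m * (c (n + 1))⁻¹)) := by ring
    _ ≤ (t ^ (n + 1))⁻¹ * Real.exp D * ((t ^ k)⁻¹ * (c (n + 1 + k))⁻¹) := by gcongr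
    _ = (t ^ (n + 1 + k))⁻¹ * (c (n + 1 + k))⁻¹ * Real.exp D := by
      rw [pow_add t (n + 1) k, mul_inv]
      ring

lemma zeta_ne_zero {S G : Type*} [Group G] {A : S → S → Prop} {φ : Space A → ℝ} {ψ : S → G}
    (hT : TopTransitive (skewA A ψ)) {P : ℝ}
    (hP : ∀ (b : S) (h : G), gurevicSkew A ψ φ b h = (P : EReal)) (a : S)
    {c : ℕ → ℝ} (hc : ∀ n : ℕ, 0 < c n) {t : ℝ} (ht : 0 < t) (z : Space A) (g : G) :
    zeta A φ ψ a c t z g ≠ 0 := by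
  obtain ⟨k, u, hk, hu0, huk, rfl⟩ := exists_connecting hT hP a (z.1 0) g
  obtain ⟨k, rfl⟩ : ∃ j, k = j + 1 := ⟨k - 1, by omega⟩
  unfold zeta
  rw [Ne, ENNReal.tsum_eq_zero]
  intro h0
  have h1 := h0 k
  rw [mul_eq_zero] at h1
  rcases h1 with h1 | h1
  · have := hc (k + 1)
    rw [ENNReal.ofReal_eq_zero] at h1
    have h2 : 0 < (t ^ (k + 1))⁻¹ * (c (k + 1))⁻¹ := by positivity
    linarith
  · unfold transferInd at h1
    rw [ENNReal.tsum_eq_zero] at h1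
    have h2 := h1 ⟨glue u (k + 1) z huk, shift_glue _ _ _ _, by
      rw [glue_apply_lt _ _ _ _ (by omega), hu0], psiN_glue _ _ _ _ _⟩
    rw [ENNReal.ofReal_eq_zero] at h2
    exact absurd h2 (not_le.2 (Real.exp_pos _))

/-- `Z` is countable: a point `z` with `σ^n z = o` is determined by `n` and by its first `n`
letters. -/
lemma countable_preOrbit {S : Type*} [Countable S] (A : S → S → Prop) (o : Space A) :
    (preOrbit A o).Countable := by
  have : preOrbit A o = ⋃ n : ℕ, {z | (shift A)^[n] z = o} := by
    ext z
    simp [preOrbit]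
  rw [this]
  refine Set.countable_iUnion fun n => ?_
  refine Set.MapsTo.countable_of_injOn (f := fun (z : Space A) (i : Fin n) => z.1 i)
    (t := Set.univ) (fun _ _ => Set.mem_univ _) ?_ Set.countable_univ
  intro x hx y hy hxy
  apply Subtype.ext
  funext i
  by_cases hi : i < n
  · exact congrFun hxy ⟨i, hi⟩
  · have h1 : ((shift A)^[n] x).1 (i - n) = ((shift A)^[n] y).1 (i - n) := by
      rw [show (shift A)^[n] x = o from hx, show (shift A)^[n] y = o from hy]
    rw [shift_iterate_apply, shift_iterate_apply, Nat.sub_add_cancel (by omega)] at h1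
    exact h1

/-! ### Convergence of the ratios -/

/-- existence of a sequence `t_n ↓ ρ` along which the ratios
`ζ_{z,g}(t_n)/ζ_{z,e}(t_n)` converge to a limit `Φ(z,g) ∈ (0,∞)`, with uniform bounds. -/
theorem statement_6 {S G : Type*} [Countable S] [Group G] [Countable G]
    (A : S → S → Prop) (φ : Space A → ℝ) (ψ : S → G)
    (hT : TopTransitive (skewA A ψ))
    (hφ : LocHolder A φ)
    (P : ℝ) (hP : ∀ (b : S) (h : G), gurevicSkew A ψ φ b h = (P : EReal))
    (a : S) (o : Space A) (ho : o ∈ CylS A a)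
    (c : ℕ → ℝ) (hc : ∀ n : ℕ, 0 < c n)
    (hcr : ∀ k : ℕ, 1 ≤ k → Tendsto (fun n : ℕ => c n / c (n + k)) atTop (nhds 1))
    (hfin : ∀ z ∈ preOrbit A o, ∀ (g : G) (t : ℝ), Real.exp P < t →
      zeta A φ ψ a c t z g < ⊤) :
    ∃ t : ℕ → ℝ, StrictAnti t ∧ (∀ n : ℕ, Real.exp P < t n) ∧
      Tendsto t atTop (nhds (Real.exp P)) ∧
      ∃ Φ : Space A → G → ℝ≥0∞,
        (∀ z ∈ preOrbit A o, ∀ g : G,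
          Tendsto (fun n : ℕ => zeta A φ ψ a c (t n) z g / zeta A φ ψ a c (t n) z 1)
              atTop (nhds (Φ z g)) ∧
            0 < Φ z g ∧ Φ z g < ⊤) ∧
        ∀ (a' : S) (g : G),
          0 < (⨅ z ∈ preOrbit A o ∩ CylS A a', Φ z g) ∧
            (⨆ z ∈ preOrbit A o ∩ CylS A a', Φ z g) < ⊤ := by
  set ρ := Real.exp P with hρ
  have hρ0 : 0 < ρ := Real.exp_pos P
  have key := zeta_le_const_mul hT hφ hP a hc hcr (R := ρ + 1) (by positivity)
  choose K hK0 hK using key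
  set s : ℕ → ℝ := fun n => ρ + 1 / ((n : ℝ) + 1) with hs
  have hs_anti : StrictAnti s := by
    intro i j hij
    have : (i : ℝ) < j := by exact_mod_cast hij
    simp only [hs]
    gcongr
  have hs_gt : ∀ n, ρ < s n := fun n => by
    simp only [hs]
    have : (0 : ℝ) < 1 / ((n : ℝ) + 1) := by positivity
    linarith
  have hs_le : ∀ n, s n ≤ ρ + 1 := fun n => by
    simp only [hs]
    have : 1 / ((n : ℝ) + 1) ≤ 1 := by
      rw [div_le_one (by positivity)]
      linarith [(Nat.cast_nonneg n : (0 : ℝ) ≤ n)]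
    linarith
  have hs_lim : Tendsto s atTop (nhds ρ) := by
    have := (tendsto_one_div_add_atTop_nhds_zero_nat (𝕜 := ℝ)).const_add ρ
    rwa [add_zero] at this
  have hbd : ∀ z ∈ preOrbit A o, ∀ (g : G) (n : ℕ),
      zeta A φ ψ a c (s n) z g / zeta A φ ψ a c (s n) z 1 ∈
        Set.Icc (ENNReal.ofReal (K g)) (ENNReal.ofReal (K g⁻¹))⁻¹ := by
    intro z hz g n
    have hpos : 0 < s n := hρ0.trans (hs_gt n)
    have h0 := zeta_ne_zero hT hP a hc hpos z 1
    have htop := (hfin z hz 1 (s n) (hs_gt n)).ne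
    have h1 := hK g (s n) hpos (hs_le n) z 1
    have h2 := hK g⁻¹ (s n) hpos (hs_le n) z g
    rw [mul_one] at h1
    rw [inv_mul_cancel] at h2
    constructor
    · rwa [ENNReal.le_div_iff_mul_le (Or.inl h0) (Or.inl htop)]
    · rw [ENNReal.div_le_iff h0 htop, mul_comm, ← div_eq_mul_inv, ENNReal.le_div_iff_mul_le
        (Or.inl (ENNReal.ofReal_pos.2 (hK0 _)).ne') (Or.inl ENNReal.ofReal_ne_top), mul_comm]
      exact h2
  have hcount : Countable (preOrbit A o) := (countable_preOrbit A o).to_subtype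
  let F : ℕ → (preOrbit A o × G → ℝ≥0∞) := fun n p =>
    zeta A φ ψ a c (s n) p.1 p.2 / zeta A φ ψ a c (s n) p.1 1
  obtain ⟨L, θ, hθ, hL⟩ := CompactSpace.tendsto_subseq F
  have hL' := fun p => (tendsto_pi_nhds.1 hL) p
  have hLbd : ∀ p, L p ∈ Set.Icc (ENNReal.ofReal (K p.2)) (ENNReal.ofReal (K p.2⁻¹))⁻¹ :=
    fun p => isClosed_Icc.mem_of_tendsto (hL' p)
      (Eventually.of_forall fun n => hbd p.1 p.1.2 p.2 (θ n))
  have hlow : ∀ g, 0 < ENNReal.ofReal (K g) := fun g => ENNReal.ofReal_pos.2 (hK0 g)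
  have hupp : ∀ g, (ENNReal.ofReal (K g⁻¹))⁻¹ < ⊤ := fun g =>
    ENNReal.inv_lt_top.2 (hlow _)
  classical
  refine ⟨s ∘ θ, hs_anti.comp_strictMono hθ, fun n => hs_gt _, hs_lim.comp hθ.tendsto_atTop,
    fun z g => if h : z ∈ preOrbit A o then L (⟨z, h⟩, g) else 0, ?_, ?_⟩
  · intro z hz g
    simp only [dif_pos hz]
    exact ⟨hL' (⟨z, hz⟩, g), (hlow g).trans_le (hLbd (⟨z, hz⟩, g)).1,
      (hLbd (⟨z, hz⟩, g)).2.trans_lt (hupp g)⟩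
  · intro a' g
    constructor
    · refine (hlow g).trans_le (le_iInf₂ fun z hz => ?_)
      simp only [dif_pos hz.1]
      exact (hLbd (⟨z, hz.1⟩, g)).1
    · refine (iSup₂_le fun z hz => ?_).trans_lt (hupp g)
      simp only [dif_pos hz.1]
      exact (hLbd (⟨z, hz.1⟩, g)).2

end Gurevic
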